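/- arXiv:2509.04701 — 3 statements merged into one kernel-verified Lean document; each statement's English description precedes it below -/
import Mathlib

section
/- For every integer n ≥ 1, the metric space (ℝⁿ×ℝ, d), where d is the parabolic metric, has Hausdorff dimension n+2; that is, the Hausdorff dimension (computed with respect to the parabolic metric) of the whole space ℝⁿ×ℝ equals n+2. -/
/-!
The dimension is found by comparing the parabolic Hausdorff measure `μH[n + 2]` with Lebesgue
measure, using that a parabolic ball of radius `r` has Lebesgue measure comparable to
`rⁿ · r² = rⁿ⁺²`.

* Lower bound (`le_dimH_univ`): a set of parabolic diameter `r` lies in a parabolic ball of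
  radius `r`, so its Lebesgue measure is at most a constant times `rⁿ⁺²`
  (`volume_preimage_closedBall_le`). By the mass distribution principle Lebesgue measure is
  bounded by a multiple of `μH[n + 2]`, which is therefore nonzero.
* Upper bound (`dimH_univ_le`): a unit cube is covered by `Nⁿ · N²` boxes with spatial side `1 / N`
  and time side `1 / N²`, each of parabolic diameter at most `(n + 1) / N`. Hence `μH[n + 2]` of a
  unit cube is at most `(n + 1)ⁿ⁺²`, and countably many unit cubes cover the space.
-/

noncomputable section
open MeasureTheory Set Matrix
open scoped ENNReal NNReal

namespace Parabolic

/-- The space `ℝⁿ × ℝ` (spatial `×` time). -/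
abbrev Amb (n : ℕ) := EuclideanSpace ℝ (Fin n) × ℝ

/-- The parabolic distance `‖X - Y‖ + |t - s|^{1/2}` on `ℝⁿ × ℝ`. -/
def pdist {n : ℕ} (P Q : Amb n) : ℝ := dist P.1 Q.1 + Real.sqrt (dist P.2 Q.2)

lemma sqrt_add_le (a b : ℝ) (ha : 0 ≤ a) (hb : 0 ≤ b) :
    Real.sqrt (a + b) ≤ Real.sqrt a + Real.sqrt b := by
  have h : a + b ≤ (Real.sqrt a + Real.sqrt b) ^ 2 := by
    rw [add_sq]
    nlinarith [Real.sq_sqrt ha, Real.sq_sqrt hb,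
      mul_nonneg (Real.sqrt_nonneg a) (Real.sqrt_nonneg b)]
  calc Real.sqrt (a + b) ≤ Real.sqrt ((Real.sqrt a + Real.sqrt b) ^ 2) := Real.sqrt_le_sqrt h
    _ = Real.sqrt a + Real.sqrt b := Real.sqrt_sq (by positivity)

lemma pdist_self {n : ℕ} (P : Amb n) : pdist P P = 0 := by simp [pdist]

lemma pdist_comm {n : ℕ} (P Q : Amb n) : pdist P Q = pdist Q P := by
  simp [pdist, dist_comm]

lemma pdist_triangle {n : ℕ} (P Q R : Amb n) : pdist P R ≤ pdist P Q + pdist Q R := by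
  have h1 : dist P.1 R.1 ≤ dist P.1 Q.1 + dist Q.1 R.1 := dist_triangle _ _ _
  have h2 : Real.sqrt (dist P.2 R.2) ≤ Real.sqrt (dist P.2 Q.2) + Real.sqrt (dist Q.2 R.2) := by
    calc Real.sqrt (dist P.2 R.2) ≤ Real.sqrt (dist P.2 Q.2 + dist Q.2 R.2) :=
          Real.sqrt_le_sqrt (dist_triangle _ _ _)
      _ ≤ _ := sqrt_add_le _ _ dist_nonneg dist_nonneg
  simp only [pdist]; linarith

lemma pdist_eq_zero {n : ℕ} {P Q : Amb n} (h : pdist P Q = 0) : P = Q := by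
  have h1 : dist P.1 Q.1 = 0 := by
    have := Real.sqrt_nonneg (dist P.2 Q.2)
    have := dist_nonneg (x := P.1) (y := Q.1)
    simp only [pdist] at h; linarith
  have h2 : Real.sqrt (dist P.2 Q.2) = 0 := by
    simp only [pdist] at h; linarith [dist_nonneg (x := P.1) (y := Q.1)]
  have h2' : dist P.2 Q.2 = 0 :=
    le_antisymm (Real.sqrt_eq_zero'.mp h2) dist_nonneg
  exact Prod.ext (dist_eq_zero.mp h1) (dist_eq_zero.mp h2')

/-- Type synonym for `ℝⁿ × ℝ` carrying the parabolic metric. -/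
def PS (n : ℕ) : Type := Amb n

def toPS {n : ℕ} : Amb n → PS n := id
def toA {n : ℕ} : PS n → Amb n := id

instance (n : ℕ) : MetricSpace (PS n) where
  dist P Q := pdist (toA P) (toA Q)
  dist_self P := pdist_self _
  dist_comm P Q := pdist_comm _ _
  dist_triangle P Q R := pdist_triangle _ _ _
  eq_of_dist_eq_zero h := pdist_eq_zero h

instance (n : ℕ) : MeasurableSpace (PS n) := borel _
instance (n : ℕ) : BorelSpace (PS n) := ⟨rfl⟩

lemma dist_PS {n : ℕ} (P Q : PS n) :
    dist P Q = dist (toA P).1 (toA Q).1 + Real.sqrt (dist (toA P).2 (toA Q).2) := rfl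

lemma continuous_toPS (n : ℕ) : Continuous (toPS : Amb n → PS n) := by
  refine continuous_iff_continuous_dist.2 ?_
  change Continuous fun x : Amb n × Amb n =>
    dist x.1.1 x.2.1 + Real.sqrt (dist x.1.2 x.2.2)
  fun_prop

/-! ### Lower bound -/

lemma volume_preimage_closedBall_le {n : ℕ} (p : PS n) {r : ℝ} (hr : 0 ≤ r) :
    volume (toPS ⁻¹' Metric.closedBall p r : Set (Amb n)) ≤
      (2 * volume (Metric.ball (0 : EuclideanSpace ℝ (Fin n)) 1)) *
        ENNReal.ofReal r ^ (n + 2) := by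
  have hsub : (toPS ⁻¹' Metric.closedBall p r : Set (Amb n)) ⊆
      Metric.closedBall (toA p).1 r ×ˢ Metric.closedBall (toA p).2 (r ^ 2) := by
    intro x hx
    have hx' : dist x.1 (toA p).1 + Real.sqrt (dist x.2 (toA p).2) ≤ r := hx
    have h1 := dist_nonneg (x := x.1) (y := (toA p).1)
    have h2 := Real.sqrt_nonneg (dist x.2 (toA p).2)
    refine ⟨Metric.mem_closedBall.2 (by linarith), Metric.mem_closedBall.2 ?_⟩
    exact (Real.sqrt_le_left hr).1 (by linarith)
  refine (measure_mono hsub).trans (le_of_eq ?_)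
  rw [Measure.volume_eq_prod, Measure.prod_prod, Measure.addHaar_closedBall _ _ hr,
    Real.volume_closedBall, finrank_euclideanSpace_fin, ENNReal.ofReal_pow hr,
    ENNReal.ofReal_mul zero_le_two, ENNReal.ofReal_pow hr, ENNReal.ofReal_ofNat]
  ring

lemma le_dimH_univ (n : ℕ) : (((n + 2 : ℕ) : ℝ≥0) : ℝ≥0∞) ≤ dimH (univ : Set (PS n)) := by
  set C : ℝ≥0∞ := 2 * volume (Metric.ball (0 : EuclideanSpace ℝ (Fin n)) 1) with hC
  have hC0 : C ≠ 0 :=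
    mul_ne_zero two_ne_zero (Metric.measure_ball_pos volume _ one_pos).ne'
  have hCt : C ≠ ∞ := ENNReal.mul_ne_top (by simp) measure_ball_lt_top.ne
  have hm : Measurable (toPS : Amb n → PS n) := (continuous_toPS n).measurable
  have hle : C⁻¹ • (volume : Measure (Amb n)).map toPS ≤
      (μH[(((n + 2 : ℕ) : ℝ≥0) : ℝ)] : Measure (PS n)) := by
    refine Measure.le_hausdorffMeasure _ _ 1 one_pos fun s hs => ?_
    rcases s.eq_empty_or_nonempty with rfl | ⟨p, hp⟩
    · simp
    have hfin : Metric.ediam s ≠ ∞ := (hs.trans_lt ENNReal.one_lt_top).ne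
    have hsub : s ⊆ Metric.closedBall p (Metric.ediam s).toReal := by
      intro x hx
      rw [Metric.mem_closedBall, dist_edist]
      exact ENNReal.toReal_mono hfin (Metric.edist_le_ediam_of_mem hx hp)
    have hb := volume_preimage_closedBall_le p (r := (Metric.ediam s).toReal)
      ENNReal.toReal_nonneg
    rw [ENNReal.ofReal_toReal hfin, ← hC] at hb
    rw [Measure.smul_apply, smul_eq_mul, NNReal.coe_natCast, ENNReal.rpow_natCast]
    calc C⁻¹ * (volume : Measure (Amb n)).map toPS s
        ≤ C⁻¹ * (volume : Measure (Amb n)).map toPS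
            (Metric.closedBall p (Metric.ediam s).toReal) := by gcongr
      _ ≤ C⁻¹ * (C * Metric.ediam s ^ (n + 2)) := by
          rw [Measure.map_apply hm Metric.isClosed_closedBall.measurableSet]
          gcongr
      _ = Metric.ediam s ^ (n + 2) := by
          rw [← mul_assoc, ENNReal.inv_mul_cancel hC0 hCt, one_mul]
  refine le_dimH_of_hausdorffMeasure_ne_zero fun h0 => ?_
  have h1 := hle univ
  rw [h0, Measure.smul_apply, smul_eq_mul, Measure.map_apply hm MeasurableSet.univ,
    preimage_univ, nonpos_iff_eq_zero, mul_eq_zero] at h1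
  rcases h1 with h1 | h1
  · exact hCt (ENNReal.inv_eq_zero.1 h1)
  · exact (Measure.measure_univ_ne_zero.2 (NeZero.ne _)) h1

/-! ### Upper bound -/

/-- The half-open unit cube with integer corner `(a, b)`. -/
def unitCube {n : ℕ} (a : Fin n → ℤ) (b : ℤ) : Set (PS n) :=
  {P | (∀ j, ⌊(toA P).1 j⌋ = a j) ∧ ⌊(toA P).2⌋ = b}

/-- The box with index `i` of the parabolic grid of mesh `1 / N` based at `(a, b)`: its spatial
sides have length `1 / N` and its time side has length `1 / N ^ 2`. -/
def gridCell {n : ℕ} (a : Fin n → ℤ) (b : ℤ) (N : ℕ)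
    (i : (Fin n → Fin N) × Fin (N ^ 2)) : Set (PS n) :=
  {P | (∀ j, ⌊(N : ℝ) * ((toA P).1 j - a j)⌋ = ((i.1 j : ℕ) : ℤ)) ∧
    ⌊(N : ℝ) ^ 2 * ((toA P).2 - b)⌋ = ((i.2 : ℕ) : ℤ)}

lemma exists_fin_floor_eq {N : ℕ} (hN : 0 < N) {x : ℝ} {a : ℤ} (h : ⌊x⌋ = a) :
    ∃ k : Fin N, ⌊(N : ℝ) * (x - a)⌋ = ((k : ℕ) : ℤ) := by
  obtain ⟨h1, h2⟩ := Int.floor_eq_iff.1 h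
  have hN' : (0 : ℝ) < N := Nat.cast_pos.2 hN
  have h3 : 0 ≤ ⌊(N : ℝ) * (x - a)⌋ := Int.floor_nonneg.2 (mul_nonneg hN'.le (by linarith))
  have h4 : ⌊(N : ℝ) * (x - a)⌋ < N := by
    rw [Int.floor_lt]
    push_cast
    nlinarith
  refine ⟨⟨⌊(N : ℝ) * (x - a)⌋.toNat, by omega⟩, ?_⟩
  simp only
  omega

lemma unitCube_subset {n : ℕ} (a : Fin n → ℤ) (b : ℤ) {N : ℕ} (hN : 0 < N) :
    unitCube a b ⊆ ⋃ i, gridCell a b N i := by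
  rintro P ⟨h1, h2⟩
  choose k hk using fun j => exists_fin_floor_eq hN (h1 j)
  obtain ⟨l, hl⟩ := exists_fin_floor_eq (pow_pos hN 2) h2
  refine mem_iUnion.2 ⟨(k, l), hk, ?_⟩
  simpa using hl

lemma dist_le_of_floor_eq {c x y a : ℝ} (hc : 0 < c)
    (h : ⌊c * (x - a)⌋ = ⌊c * (y - a)⌋) : dist x y ≤ 1 / c := by
  have h1 := Int.abs_sub_lt_one_of_floor_eq_floor h
  rw [Real.dist_eq, le_div_iff₀ hc]
  rw [show c * (x - a) - c * (y - a) = (x - y) * c by ring, abs_mul, abs_of_pos hc] at h1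
  exact h1.le

lemma ediam_gridCell_le {n : ℕ} (a : Fin n → ℤ) (b : ℤ) {N : ℕ} (hN : 0 < N)
    (i : (Fin n → Fin N) × Fin (N ^ 2)) :
    Metric.ediam (gridCell a b N i) ≤ ((n + 1 : ℕ) : ℝ≥0∞) / N := by
  have hN' : (0 : ℝ) < N := Nat.cast_pos.2 hN
  refine Metric.ediam_le fun P hP Q hQ => ?_
  have hx : dist (toA P).1 (toA Q).1 ≤ n / N := by
    rw [EuclideanSpace.dist_eq]
    refine Real.sqrt_le_iff.2 ⟨by positivity, ?_⟩
    calc ∑ j, dist ((toA P).1 j) ((toA Q).1 j) ^ 2 ≤ ∑ _j : Fin n, (1 / (N : ℝ)) ^ 2 := by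
          gcongr with j
          exact dist_le_of_floor_eq hN' ((hP.1 j).trans (hQ.1 j).symm)
      _ = n * (1 / (N : ℝ)) ^ 2 := by simp
      _ ≤ (n : ℝ) ^ 2 * (1 / (N : ℝ)) ^ 2 := by
          gcongr
          exact_mod_cast Nat.le_self_pow two_ne_zero n
      _ = (n / N : ℝ) ^ 2 := by ring
  have ht : Real.sqrt (dist (toA P).2 (toA Q).2) ≤ 1 / N := by
    refine Real.sqrt_le_iff.2 ⟨by positivity, ?_⟩
    rw [_root_.one_div_pow]
    exact dist_le_of_floor_eq (pow_pos hN' 2) (hP.2.trans hQ.2.symm)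
  have hd : dist P Q ≤ ((n + 1 : ℕ) : ℝ) / (N : ℝ) := by
    rw [dist_PS]
    push_cast
    rw [add_div]
    exact add_le_add hx ht
  rw [edist_dist]
  refine (ENNReal.ofReal_le_ofReal hd).trans_eq ?_
  rw [ENNReal.ofReal_div_of_pos hN', ENNReal.ofReal_natCast, ENNReal.ofReal_natCast]

lemma hausdorffMeasure_unitCube_le {n : ℕ} (a : Fin n → ℤ) (b : ℤ) :
    μH[(((n + 2 : ℕ) : ℝ≥0) : ℝ)] (unitCube a b) ≤ ((n + 1 : ℕ) : ℝ≥0∞) ^ (n + 2) := by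
  have hr : Filter.Tendsto (fun N : ℕ => ((n + 1 : ℕ) : ℝ≥0∞) / (N : ℝ≥0∞)) Filter.atTop
      (nhds 0) := by
    simpa [div_eq_mul_inv] using ENNReal.Tendsto.const_mul ENNReal.tendsto_inv_nat_nhds_zero
      (Or.inr (ENNReal.natCast_ne_top (n + 1)))
  refine (Measure.hausdorffMeasure_le_liminf_sum _ _ _ hr (gridCell a b) ?_ ?_).trans ?_
  · filter_upwards [Filter.eventually_gt_atTop 0] with N hN i using ediam_gridCell_le a b hN i
  · filter_upwards [Filter.eventually_gt_atTop 0] with N hN using unitCube_subset a b hN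
  · refine Filter.liminf_le_of_frequently_le' (Filter.Eventually.frequently ?_)
    filter_upwards [Filter.eventually_gt_atTop 0] with N hN
    have hN0 : (N : ℝ≥0∞) ^ (n + 2) ≠ 0 := pow_ne_zero _ (Nat.cast_ne_zero.2 hN.ne')
    have hNt : (N : ℝ≥0∞) ^ (n + 2) ≠ ∞ := ENNReal.pow_ne_top (ENNReal.natCast_ne_top N)
    rw [NNReal.coe_natCast]
    simp_rw [ENNReal.rpow_natCast]
    calc ∑ i, Metric.ediam (gridCell a b N i) ^ (n + 2)
        ≤ ∑ _i : (Fin n → Fin N) × Fin (N ^ 2), (((n + 1 : ℕ) : ℝ≥0∞) / N) ^ (n + 2) := by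
          gcongr with i
          exact ediam_gridCell_le a b hN i
      _ = (N : ℝ≥0∞) ^ (n + 2) * (((n + 1 : ℕ) : ℝ≥0∞) / N) ^ (n + 2) := by
          rw [Finset.sum_const, nsmul_eq_mul, Finset.card_univ, Fintype.card_prod,
            Fintype.card_fun, Fintype.card_fin, Fintype.card_fin, Fintype.card_fin, ← pow_add,
            Nat.cast_pow]
      _ = ((n + 1 : ℕ) : ℝ≥0∞) ^ (n + 2) := by
          rw [div_eq_mul_inv, mul_pow, ← ENNReal.inv_pow, mul_left_comm,
            ENNReal.mul_inv_cancel hN0 hNt, mul_one]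

lemma dimH_univ_le (n : ℕ) : dimH (univ : Set (PS n)) ≤ (((n + 2 : ℕ) : ℝ≥0) : ℝ≥0∞) := by
  have hU : (univ : Set (PS n)) = ⋃ c : (Fin n → ℤ) × ℤ, unitCube c.1 c.2 := by
    refine (eq_univ_of_forall fun P => mem_iUnion.2 ?_).symm
    exact ⟨(fun j => ⌊(toA P).1 j⌋, ⌊(toA P).2⌋), fun _ => rfl, rfl⟩
  rw [hU, dimH_iUnion]
  refine iSup_le fun c => dimH_le_of_hausdorffMeasure_ne_top (ne_top_of_le_ne_top ?_
    (hausdorffMeasure_unitCube_le c.1 c.2))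
  exact ENNReal.pow_ne_top (ENNReal.natCast_ne_top _)

/-- The metric space `(ℝⁿ × ℝ, d)` with the parabolic metric `d` has Hausdorff
dimension `n + 2`. -/
theorem parabolic_hausdorff_dimension (n : ℕ) (hn : 1 ≤ n) :
    dimH (univ : Set (PS n)) = (n : ℝ≥0∞) + 2 := by
  have h := le_antisymm (dimH_univ_le n) (le_dimH_univ n)
  rw [h]
  push_cast
  rfl

end Parabolic
end
end

section
/- Let Q₀ ∈ 𝔻 be a dyadic cube of ℝ^d, let μ be a regular Borel measure on Q₀ that is dyadically doubling on Q₀, and let {𝒪_l}_{l=1}^k, with families ℱ_l, be a good ε₀-cover of a Borel set F ⊆ Q₀ with respect to μ of length k. Then for all indices 1 ≤ m ≤ l ≤ k and every cube Q ∈ ℱ_m, one has μ(𝒪_l ∩ Q) ≤ ε₀^{l−m} μ(Q). -/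
/-!
The decay follows by induction on `l` from the one-step estimate
`μ (O (l + 1) ∩ Q) ≤ ε₀ * μ (O l ∩ Q)` for `Q ∈ Fam m`, `m ≤ l`.

For `l = m` this is the smallness condition itself, since `Q ⊆ O m`. For `m < l`, dyadic cubes
are nested or disjoint (`dCube_subset_of_inter`), and no cube `R ∈ Fam l` can contain `Q`
(`not_subset_of_mem`): otherwise `Q ⊆ O l ⊆ O (m + 1)`, and smallness at level `m + 1` would give
`μ Q ≤ ε₀ * μ Q`, against `0 < μ Q < ∞` and `ε₀ < 1`. Hence `O l ∩ Q` is the disjoint union of the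
countably many `R ∈ Fam l` with `R ⊆ Q`, and summing `μ (O (l + 1) ∩ R) ≤ ε₀ * μ R` over these `R`
gives the estimate (`measure_step`).
-/

noncomputable section
open MeasureTheory Set Matrix
open scoped ENNReal NNReal

namespace Parabolic

/-- The standard dyadic cube `2^{−k}(z + [0,1)^d)` of `ℝ^d`. -/
def dCube (d : ℕ) (k : ℤ) (z : Fin d → ℤ) : Set (Fin d → ℝ) :=
  {x | ∀ i, (z i : ℝ) * 2 ^ (-k) ≤ x i ∧ x i < ((z i : ℝ) + 1) * 2 ^ (-k)}

/-- `Q` is a cube of the standard dyadic grid `𝔻` of `ℝ^d`. -/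
def IsDyadic {d : ℕ} (Q : Set (Fin d → ℝ)) : Prop := ∃ k z, Q = dCube d k z

/-- `Q'` is a dyadic child of `Q`. -/
def IsDyadicChild {d : ℕ} (Q' Q : Set (Fin d → ℝ)) : Prop :=
  ∃ (k : ℤ) (z z' : Fin d → ℤ), Q = dCube d k z ∧ Q' = dCube d (k + 1) z' ∧ Q' ⊆ Q

/-- `μ` is dyadically doubling on `Q₀` with constant `Cμ`: every dyadic subcube of `Q₀`
has finite positive measure, and `μ(Q) ≤ Cμ μ(Q')` whenever `Q'` is a dyadic child of a
dyadic cube `Q ⊆ Q₀`. -/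
def DyadicallyDoubling {d : ℕ} (μ : Measure (Fin d → ℝ)) (Q₀ : Set (Fin d → ℝ))
    (Cμ : ℝ) : Prop :=
  (∀ Q : Set (Fin d → ℝ), IsDyadic Q → Q ⊆ Q₀ → 0 < μ Q ∧ μ Q < ⊤) ∧
    ∀ Q Q' : Set (Fin d → ℝ), IsDyadic Q → Q ⊆ Q₀ → IsDyadicChild Q' Q →
      μ Q ≤ ENNReal.ofReal Cμ * μ Q'

/-- A good `ε₀`-cover of `F` (with respect to `μ`) from `F` to `Q₀`, of length `k`:
Borel sets `𝒪_l = O l` (`1 ≤ l ≤ k`), each a disjoint union of the dyadic subcubes of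
`Q₀` in the family `Fam l`, with `F ⊆ 𝒪_k ⊆ ⋯ ⊆ 𝒪_1 ⊆ Q₀` and
`μ(𝒪_l ∩ Q) ≤ ε₀ μ(Q)` for every `Q ∈ Fam (l−1)`. -/
structure GoodCover {d : ℕ} (μ : Measure (Fin d → ℝ)) (Q₀ F : Set (Fin d → ℝ)) (ε₀ : ℝ)
    (k : ℕ) (O : ℕ → Set (Fin d → ℝ)) (Fam : ℕ → Set (Set (Fin d → ℝ))) : Prop where
  one_le : 1 ≤ k
  mem_dyadic : ∀ l, 1 ≤ l → l ≤ k → ∀ Q ∈ Fam l, IsDyadic Q ∧ Q ⊆ Q₀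
  disj : ∀ l, 1 ≤ l → l ≤ k → (Fam l).Pairwise Disjoint
  unions : ∀ l, 1 ≤ l → l ≤ k → O l = ⋃₀ Fam l
  last : F ⊆ O k
  nested : ∀ l, 2 ≤ l → l ≤ k → O l ⊆ O (l - 1)
  first : O 1 ⊆ Q₀
  small : ∀ l, 2 ≤ l → l ≤ k → ∀ Q ∈ Fam (l - 1),
    μ (O l ∩ Q) ≤ ENNReal.ofReal ε₀ * μ Q


theorem measurableSet_dCube (d : ℕ) (k : ℤ) (z : Fin d → ℤ) : MeasurableSet (dCube d k z) := by
  have h : dCube d k z = Set.pi univ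
      (fun i => Ico ((z i : ℝ) * 2 ^ (-k)) (((z i : ℝ) + 1) * 2 ^ (-k))) := by
    ext x
    simp [dCube]
  rw [h]
  exact MeasurableSet.univ_pi fun i => measurableSet_Ico

theorem countable_isDyadic (d : ℕ) : {Q : Set (Fin d → ℝ) | IsDyadic Q}.Countable := by
  refine (countable_range (fun p : ℤ × (Fin d → ℤ) => dCube d p.1 p.2)).mono ?_
  rintro Q ⟨k, z, rfl⟩
  exact ⟨(k, z), rfl⟩

/-- Of two intersecting dyadic cubes, the one of the later generation lies in the other. -/
theorem dCube_subset_of_inter {d : ℕ} {k k' : ℤ} (hk : k ≤ k') {z z' : Fin d → ℤ}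
    {x : Fin d → ℝ} (hx : x ∈ dCube d k z) (hx' : x ∈ dCube d k' z') :
    dCube d k' z' ⊆ dCube d k z := by
  obtain ⟨n, rfl⟩ : ∃ n : ℕ, k' = k + n := ⟨(k' - k).toNat, by omega⟩
  have hs : (0 : ℝ) < 2 ^ (-(k + n)) := by positivity
  have hp : (2 : ℝ) ^ (-k) = 2 ^ n * 2 ^ (-(k + n)) := by
    rw [← zpow_natCast, ← zpow_add₀ (by norm_num)]
    congr 1
    ring
  intro y hy i
  obtain ⟨h1, h2⟩ := hx i
  obtain ⟨h1', h2'⟩ := hx' i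
  obtain ⟨h3, h4⟩ := hy i
  rw [hp, ← mul_assoc] at h1 h2 ⊢
  rw [← mul_assoc]
  -- In units of the finer side length, all endpoints are integers, so the strict
  -- inequalities through `x i` improve to non-strict ones between endpoints.
  have a : z i * 2 ^ n < z' i + 1 := by
    have := lt_of_mul_lt_mul_right (h1.trans_lt h2') hs.le
    exact_mod_cast this
  have b : z' i < (z i + 1) * 2 ^ n := by
    have := lt_of_mul_lt_mul_right (h1'.trans_lt h2) hs.le
    exact_mod_cast this
  have a' : (z i : ℝ) * 2 ^ n ≤ z' i := by exact_mod_cast Int.lt_add_one_iff.mp a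
  have b' : (z' i : ℝ) + 1 ≤ (z i + 1) * 2 ^ n := by exact_mod_cast Int.add_one_le_iff.mpr b
  exact ⟨(mul_le_mul_of_nonneg_right a' hs.le).trans h3,
    h4.trans_le (mul_le_mul_of_nonneg_right b' hs.le)⟩

theorem IsDyadic.subset_or_subset {d : ℕ} {Q R : Set (Fin d → ℝ)} (hQ : IsDyadic Q)
    (hR : IsDyadic R) {x : Fin d → ℝ} (hxQ : x ∈ Q) (hxR : x ∈ R) : Q ⊆ R ∨ R ⊆ Q := by
  obtain ⟨k, z, rfl⟩ := hQ
  obtain ⟨k', z', rfl⟩ := hR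
  rcases le_total k k' with h | h
  · exact Or.inr (dCube_subset_of_inter h hxQ hxR)
  · exact Or.inl (dCube_subset_of_inter h hxR hxQ)

section GoodCover

variable {d : ℕ} {μ : Measure (Fin d → ℝ)} {Q₀ F : Set (Fin d → ℝ)} {Cμ ε₀ : ℝ} {k : ℕ}
  {O : ℕ → Set (Fin d → ℝ)} {Fam : ℕ → Set (Set (Fin d → ℝ))}

theorem GoodCover.antitone (h : GoodCover μ Q₀ F ε₀ k O Fam) {m l : ℕ} (hm : 1 ≤ m)
    (hml : m ≤ l) : l ≤ k → O l ⊆ O m := by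
  induction l, hml using Nat.le_induction with
  | base => exact fun _ => Subset.rfl
  | succ l hl ih => exact fun hk => (h.nested (l + 1) (by omega) hk).trans (ih (by omega))

/-- A cube of an earlier family is never contained in a cube of a later one: it would be covered
by the next set `O (m + 1)`, which fills at most the proportion `ε₀ < 1` of it. -/
theorem GoodCover.not_subset_of_mem (h : GoodCover μ Q₀ F ε₀ k O Fam)
    (hdbl : DyadicallyDoubling μ Q₀ Cμ) (hε₁ : ε₀ < 1) {m l : ℕ} (hm : 1 ≤ m) (hml : m < l)
    (hl : l ≤ k) {Q R : Set (Fin d → ℝ)} (hQ : Q ∈ Fam m) (hR : R ∈ Fam l) : ¬ Q ⊆ R := by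
  intro hQR
  have hRO : R ⊆ O l := by
    rw [h.unions l (by omega) hl]
    exact subset_sUnion_of_mem hR
  have hQO : Q ⊆ O (m + 1) := (hQR.trans hRO).trans (h.antitone (by omega) hml hl)
  have hs := h.small (m + 1) (by omega) (by omega) Q hQ
  rw [inter_eq_self_of_subset_right hQO] at hs
  obtain ⟨hd, hsub⟩ := h.mem_dyadic m hm (by omega) Q hQ
  obtain ⟨hpos, hfin⟩ := hdbl.1 Q hd hsub
  have hlt : ENNReal.ofReal ε₀ * μ Q < 1 * μ Q :=
    ENNReal.mul_lt_mul_left hpos.ne' hfin.ne (by simpa using hε₁)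
  rw [one_mul] at hlt
  exact absurd hs hlt.not_ge

theorem GoodCover.measure_step (h : GoodCover μ Q₀ F ε₀ k O Fam)
    (hdbl : DyadicallyDoubling μ Q₀ Cμ) (hε₁ : ε₀ < 1) {m l : ℕ} (hm : 1 ≤ m) (hml : m < l)
    (hl : l + 1 ≤ k) {Q : Set (Fin d → ℝ)} (hQ : Q ∈ Fam m) :
    μ (O (l + 1) ∩ Q) ≤ ENNReal.ofReal ε₀ * μ (O l ∩ Q) := by
  have hdy := h.mem_dyadic l (by omega) (by omega)
  set S : Set (Set (Fin d → ℝ)) := {R ∈ Fam l | R ⊆ Q} with hS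
  have hSc : S.Countable := (countable_isDyadic d).mono fun R hR => (hdy R hR.1).1
  have hsub : O (l + 1) ∩ Q ⊆ ⋃ R ∈ S, O (l + 1) ∩ R := by
    rintro x ⟨hxO, hxQ⟩
    have hxl : x ∈ O l := h.nested (l + 1) (by omega) hl hxO
    rw [h.unions l (by omega) (by omega)] at hxl
    obtain ⟨R, hR, hxR⟩ := hxl
    have hRQ : R ⊆ Q :=
      (((h.mem_dyadic m hm (by omega) Q hQ).1.subset_or_subset (hdy R hR).1 hxQ hxR).resolve_left
        (h.not_subset_of_mem hdbl hε₁ hm hml (by omega) hQ hR))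
    exact mem_biUnion (show R ∈ S from ⟨hR, hRQ⟩) ⟨hxO, hxR⟩
  have hSmeas : ∀ R ∈ S, MeasurableSet R := by
    intro R hR
    obtain ⟨j, w, rfl⟩ := (hdy R hR.1).1
    exact measurableSet_dCube d j w
  have hSdisj : S.Pairwise Disjoint :=
    (h.disj l (by omega) (by omega)).mono fun R hR => hR.1
  calc μ (O (l + 1) ∩ Q) ≤ μ (⋃ R ∈ S, O (l + 1) ∩ R) := measure_mono hsub
    _ ≤ ∑' R : S, μ (O (l + 1) ∩ R) := measure_biUnion_le μ hSc _
    _ ≤ ∑' R : S, ENNReal.ofReal ε₀ * μ R :=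
        ENNReal.tsum_le_tsum fun R => h.small (l + 1) (by omega) hl R R.2.1
    _ = ENNReal.ofReal ε₀ * μ (⋃₀ S) := by
        rw [ENNReal.tsum_mul_left, measure_sUnion hSc hSdisj hSmeas]
    _ ≤ ENNReal.ofReal ε₀ * μ (O l ∩ Q) := by
        gcongr
        rw [h.unions l (by omega) (by omega)]
        exact sUnion_subset fun R hR => subset_inter (subset_sUnion_of_mem hR.1) hR.2

end GoodCover

/-- Iterated smallness for good `ε₀`-covers: if `{𝒪_l}` is a good `ε₀`-cover of `F ⊆ Q₀`
with respect to a regular Borel measure `μ` which is dyadically doubling on `Q₀`, then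
`μ(𝒪_l ∩ Q) ≤ ε₀^{l−m} μ(Q)` for all `1 ≤ m ≤ l ≤ k` and all `Q ∈ ℱ_m`. -/
theorem good_cover_geometric_decay (d : ℕ) (k : ℤ) (z : Fin d → ℤ)
    (μ : Measure (Fin d → ℝ)) (Cμ : ℝ) (hreg : μ.Regular)
    (hdbl : DyadicallyDoubling μ (dCube d k z) Cμ)
    (ε₀ : ℝ) (hε₀ : 0 < ε₀) (hε₁ : ε₀ < 1)
    (F : Set (Fin d → ℝ)) (hF : F ⊆ dCube d k z) (hFmeas : MeasurableSet F)
    (kk : ℕ) (O : ℕ → Set (Fin d → ℝ)) (Fam : ℕ → Set (Set (Fin d → ℝ)))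
    (hgc : GoodCover μ (dCube d k z) F ε₀ kk O Fam) :
    ∀ m l : ℕ, 1 ≤ m → m ≤ l → l ≤ kk → ∀ Q ∈ Fam m,
      μ (O l ∩ Q) ≤ ENNReal.ofReal (ε₀ ^ (l - m)) * μ Q := by
  intro m l hm hml
  induction l, hml using Nat.le_induction with
  | base =>
    intro _ Q _
    simpa using measure_mono inter_subset_right
  | succ l hml ih =>
    intro hl Q hQ
    rcases hml.eq_or_lt with rfl | hlt
    · simpa using hgc.small (m + 1) (by omega) hl Q hQ
    · calc μ (O (l + 1) ∩ Q) ≤ ENNReal.ofReal ε₀ * μ (O l ∩ Q) :=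
            hgc.measure_step hdbl hε₁ hm hlt hl hQ
        _ ≤ ENNReal.ofReal ε₀ * (ENNReal.ofReal (ε₀ ^ (l - m)) * μ Q) := by
            gcongr
            exact ih (by omega) Q hQ
        _ = ENNReal.ofReal (ε₀ ^ (l + 1 - m)) * μ Q := by
            rw [← mul_assoc, ← ENNReal.ofReal_mul hε₀.le, ← pow_succ', Nat.sub_add_comm hml]

end Parabolic
end
end

section
/- (Discretized John–Nirenberg lemma.) Let σ be a Borel measure on ℝ^d that is finite and positive on dyadic cubes, and let α : 𝔻 → [0,∞). Suppose there exist η > 0 and c₀ > 0 such that for every Q ∈ 𝔻 there exists a pairwise disjoint family ℱ_Q = {Q_j} ⊂ 𝔻(Q) with σ(Q ∖ ⋃_{Q_j∈ℱ_Q} Q_j) ≥ η σ(Q) and ∑_{Q' ∈ S_Q} α_{Q'} ≤ c₀ σ(Q), where S_Q := {Q' ∈ 𝔻(Q) : Q' is not contained in any Q_j ∈ ℱ_Q}. Then for every Q ∈ 𝔻, ∑_{Q' ∈ 𝔻(Q)} α_{Q'} ≤ (c₀/η) σ(Q). -/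
/-!
Write `Σ(Q)` for the sum of `a` over the dyadic subcubes of `Q`, with `a` first replaced by a
truncation `b ≤ a` supported on a finite set of cubes, and put `A = sup_Q Σ(Q) / σ(Q)`.
Every subcube of `Q` either lies in `S_Q` or inside some member of `ℱ_Q`, so
`Σ(Q) ≤ c₀ σ(Q) + ∑_{J ∈ ℱ_Q} Σ(J) ≤ c₀ σ(Q) + A σ(⋃ ℱ_Q)`, while
`σ(⋃ ℱ_Q) + η σ(Q) ≤ σ(Q)`. Dividing by `σ(Q)` and taking the supremum gives
`A + η A ≤ c₀ + A`. The truncation makes `A` finite, because `Q ∈ S_Q` forces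
`a(Q) ≤ c₀ σ(Q)`; hence `A ≤ c₀ / η`. The bound does not depend on the truncation, and so
passes to the full sum.
-/

noncomputable section
open MeasureTheory Set Matrix
open scoped ENNReal NNReal

namespace Parabolic

theorem IsDyadic.measurableSet {d : ℕ} {Q : Set (Fin d → ℝ)} (hQ : IsDyadic Q) :
    MeasurableSet Q := by
  obtain ⟨k, z, rfl⟩ := hQ
  have : dCube d k z = Set.pi univ
      fun i => Ico ((z i : ℝ) * 2 ^ (-k)) (((z i : ℝ) + 1) * 2 ^ (-k)) := by
    ext x
    simp [dCube]
  rw [this]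
  exact MeasurableSet.univ_pi fun i => measurableSet_Ico

/-- The sum of `b` over the dyadic subcubes of `Q`. -/
def cubeSum {d : ℕ} (b : Set (Fin d → ℝ) → ℝ≥0∞) (Q : Set (Fin d → ℝ)) : ℝ≥0∞ :=
  ∑' Q' : {Q' : Set (Fin d → ℝ) // IsDyadic Q' ∧ Q' ⊆ Q}, b Q'

/-- Each subcube of `Q` belongs to the stopping region or lies inside a member of `Fam`. -/
theorem cubeSum_le {d : ℕ} (b : Set (Fin d → ℝ) → ℝ≥0∞) (Q : Set (Fin d → ℝ))
    (Fam : Set (Set (Fin d → ℝ))) :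
    cubeSum b Q ≤
      (∑' Q' : {Q' : Set (Fin d → ℝ) // IsDyadic Q' ∧ Q' ⊆ Q ∧ ∀ J ∈ Fam, ¬ Q' ⊆ J}, b Q')
        + ∑' J : Fam, cubeSum b J := by
  let S : Set (Set (Fin d → ℝ)) := {Q' | IsDyadic Q' ∧ Q' ⊆ Q ∧ ∀ J ∈ Fam, ¬ Q' ⊆ J}
  let T : Fam → Set (Set (Fin d → ℝ)) := fun J => {Q' | IsDyadic Q' ∧ Q' ⊆ J}
  have hsub : {Q' : Set (Fin d → ℝ) | IsDyadic Q' ∧ Q' ⊆ Q} ⊆ S ∪ ⋃ J, T J := by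
    rintro Q' ⟨h1, h2⟩
    by_cases h3 : ∀ J ∈ Fam, ¬ Q' ⊆ J
    · exact Or.inl ⟨h1, h2, h3⟩
    · push Not at h3
      obtain ⟨J, hJ, h4⟩ := h3
      exact Or.inr (mem_iUnion.2 ⟨⟨J, hJ⟩, h1, h4⟩)
  calc cubeSum b Q ≤ ∑' x : (S ∪ ⋃ J, T J : Set (Set (Fin d → ℝ))), b x :=
        ENNReal.tsum_mono_subtype b hsub
    _ ≤ (∑' x : S, b x) + ∑' x : (⋃ J, T J : Set (Set (Fin d → ℝ))), b x :=
        ENNReal.tsum_union_le b _ _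
    _ ≤ (∑' x : S, b x) + ∑' J, ∑' x : T J, b x := by
        gcongr
        exact ENNReal.tsum_iUnion_le_tsum b T

/-- The bound under the a priori assumption that `A = sup_Q Σ(Q) / σ(Q)` is finite, which is
given here as the existence of some constant `C`. -/
theorem cubeSum_le_of_finite (d : ℕ) (σ : Measure (Fin d → ℝ))
    (hσ : ∀ Q : Set (Fin d → ℝ), IsDyadic Q → 0 < σ Q ∧ σ Q < ⊤)
    (b : Set (Fin d → ℝ) → ℝ≥0∞) (η c₀ : ℝ) (hη : 0 < η)
    (h : ∀ Q : Set (Fin d → ℝ), IsDyadic Q →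
      ∃ Fam : Set (Set (Fin d → ℝ)),
        (∀ J ∈ Fam, IsDyadic J ∧ J ⊆ Q) ∧ Fam.Pairwise Disjoint ∧
        ENNReal.ofReal η * σ Q ≤ σ (Q \ ⋃₀ Fam) ∧
        (∑' Q' : {Q' : Set (Fin d → ℝ) // IsDyadic Q' ∧ Q' ⊆ Q ∧ ∀ J ∈ Fam, ¬ Q' ⊆ J},
            b Q') ≤ ENNReal.ofReal c₀ * σ Q)
    (C : ℝ≥0∞) (hC : C ≠ ⊤) (hbC : ∀ Q, IsDyadic Q → cubeSum b Q ≤ C * σ Q)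
    (Q : Set (Fin d → ℝ)) (hQ : IsDyadic Q) :
    cubeSum b Q ≤ ENNReal.ofReal (c₀ / η) * σ Q := by
  let A : ℝ≥0∞ := ⨆ R : {R : Set (Fin d → ℝ) // IsDyadic R}, cubeSum b R / σ R
  have hAC : A ≤ C := iSup_le fun R => ENNReal.div_le_of_le_mul (hbC R R.2)
  have hA : A ≠ ⊤ := ne_top_of_le_ne_top hC hAC
  have hbA : ∀ R, IsDyadic R → cubeSum b R ≤ A * σ R := fun R hR =>
    (ENNReal.div_le_iff (hσ R hR).1.ne' (hσ R hR).2.ne).1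
      (le_iSup (fun R : {R : Set (Fin d → ℝ) // IsDyadic R} => cubeSum b R / σ R) ⟨R, hR⟩)
  have key : ∀ R, IsDyadic R →
      cubeSum b R + A * ENNReal.ofReal η * σ R ≤ (ENNReal.ofReal c₀ + A) * σ R := by
    intro R hR
    obtain ⟨Fam, hFam, hdisj, hbig, hsum⟩ := h R hR
    have hcount : Fam.Countable := (countable_isDyadic d).mono fun J hJ => (hFam J hJ).1
    have hmeas : ∀ J ∈ Fam, MeasurableSet J := fun J hJ => (hFam J hJ).1.measurableSet
    have hU : MeasurableSet (⋃₀ Fam) := MeasurableSet.sUnion hcount hmeas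
    have hUR : ⋃₀ Fam ⊆ R := sUnion_subset fun J hJ => (hFam J hJ).2
    have hsplit : σ (⋃₀ Fam) + σ (R \ ⋃₀ Fam) = σ R := by
      have := measure_inter_add_sdiff (μ := σ) R hU
      rwa [inter_eq_self_of_subset_right hUR] at this
    have hFsum : ∑' J : Fam, cubeSum b J ≤ A * σ (⋃₀ Fam) := by
      rw [measure_sUnion hcount hdisj hmeas, ← ENNReal.tsum_mul_left]
      exact ENNReal.tsum_le_tsum fun J => hbA J (hFam J J.2).1
    calc cubeSum b R + A * ENNReal.ofReal η * σ R
        ≤ (ENNReal.ofReal c₀ * σ R + A * σ (⋃₀ Fam)) + A * σ (R \ ⋃₀ Fam) := by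
          rw [mul_assoc]
          gcongr
          exact (cubeSum_le b R Fam).trans (add_le_add hsum hFsum)
      _ = (ENNReal.ofReal c₀ + A) * σ R := by
          rw [add_assoc, ← mul_add, hsplit, add_mul]
  have hfin : A + A * ENNReal.ofReal η ≤ ENNReal.ofReal c₀ + A := by
    have : Nonempty {R : Set (Fin d → ℝ) // IsDyadic R} := ⟨⟨Q, hQ⟩⟩
    rw [ENNReal.iSup_add]
    refine iSup_le fun R => ?_
    have h0 := (hσ R R.2).1.ne'
    have h1 := (hσ R R.2).2.ne
    refine (ENNReal.mul_le_mul_iff_left h0 h1).1 ?_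
    rw [add_mul, ENNReal.div_mul_cancel h0 h1]
    exact key R R.2
  have hAη : A * ENNReal.ofReal η ≤ ENNReal.ofReal c₀ := by
    rw [add_comm (ENNReal.ofReal c₀)] at hfin
    exact (ENNReal.add_le_add_iff_left hA).1 hfin
  have hAle : A ≤ ENNReal.ofReal (c₀ / η) := by
    rw [ENNReal.ofReal_div_of_pos hη]
    exact (ENNReal.le_div_iff_mul_le (Or.inl (by simpa using hη)) (Or.inl (by simp))).2 hAη
  exact (hbA Q hQ).trans (by gcongr)

/-- Discretized John–Nirenberg lemma: let `σ` be a Borel measure on `ℝ^d`, finite and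
positive on dyadic cubes, and `a : 𝔻 → [0,∞]`. If there are `η, c₀ > 0` such that every
dyadic cube `Q` admits a pairwise disjoint family `ℱ_Q` of dyadic subcubes with
`σ(Q ∖ ⋃ ℱ_Q) ≥ η σ(Q)` and `∑_{Q' ∈ S_Q} a(Q') ≤ c₀ σ(Q)` — where `S_Q` consists of the
dyadic subcubes of `Q` contained in no member of `ℱ_Q` — then
`∑_{Q' ∈ 𝔻(Q)} a(Q') ≤ (c₀/η) σ(Q)` for every dyadic cube `Q`. -/
theorem discretized_john_nirenberg (d : ℕ) (σ : Measure (Fin d → ℝ))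
    (hσ : ∀ Q : Set (Fin d → ℝ), IsDyadic Q → 0 < σ Q ∧ σ Q < ⊤)
    (a : Set (Fin d → ℝ) → ℝ≥0∞) (η c₀ : ℝ) (hη : 0 < η) (hc₀ : 0 < c₀)
    (h : ∀ Q : Set (Fin d → ℝ), IsDyadic Q →
      ∃ Fam : Set (Set (Fin d → ℝ)),
        (∀ J ∈ Fam, IsDyadic J ∧ J ⊆ Q) ∧ Fam.Pairwise Disjoint ∧
        ENNReal.ofReal η * σ Q ≤ σ (Q \ ⋃₀ Fam) ∧
        (∑' Q' : {Q' : Set (Fin d → ℝ) // IsDyadic Q' ∧ Q' ⊆ Q ∧ ∀ J ∈ Fam, ¬ Q' ⊆ J},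
            a Q') ≤ ENNReal.ofReal c₀ * σ Q) :
    ∀ Q : Set (Fin d → ℝ), IsDyadic Q →
      (∑' Q' : {Q' : Set (Fin d → ℝ) // IsDyadic Q' ∧ Q' ⊆ Q}, a Q')
        ≤ ENNReal.ofReal (c₀ / η) * σ Q := by
  classical
  -- `Q ∉ Fam`, as otherwise `Q \ ⋃₀ Fam` would be empty; hence `Q` is one of the summands.
  have hself : ∀ Q, IsDyadic Q → a Q ≤ ENNReal.ofReal c₀ * σ Q := by
    intro Q hQ
    obtain ⟨Fam, hFam, -, hbig, hsum⟩ := h Q hQ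
    have hnot : ∀ J ∈ Fam, ¬ Q ⊆ J := by
      intro J hJ hQJ
      have hempty : Q \ ⋃₀ Fam = ∅ :=
        sdiff_eq_empty.2 (hQJ.trans (subset_sUnion_of_mem hJ))
      rw [hempty, measure_empty, nonpos_iff_eq_zero, mul_eq_zero] at hbig
      rcases hbig with h0 | h0
      · exact absurd h0 (by simpa using hη)
      · exact (hσ Q hQ).1.ne' h0
    exact (ENNReal.le_tsum (f := fun Q' : {Q' : Set (Fin d → ℝ) //
      IsDyadic Q' ∧ Q' ⊆ Q ∧ ∀ J ∈ Fam, ¬ Q' ⊆ J} => a Q') ⟨Q, hQ, subset_rfl, hnot⟩).trans hsum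
  intro Q hQ
  rw [ENNReal.tsum_eq_iSup_sum]
  refine iSup_le fun s => ?_
  let G : Finset (Set (Fin d → ℝ)) := s.image Subtype.val
  let b : Set (Fin d → ℝ) → ℝ≥0∞ := fun R => if R ∈ G then a R else 0
  have hba : ∀ R, b R ≤ a R := by
    intro R
    by_cases hR : R ∈ G <;> simp [b, hR]
  have hsb : ∑ x ∈ s, a x ≤ cubeSum b Q := by
    have heq : ∑ x ∈ s, a x = ∑ x ∈ s, b x := by
      refine Finset.sum_congr rfl fun x hx => ?_
      have hxG : x.1 ∈ G := Finset.mem_image_of_mem _ hx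
      simp [b, hxG]
    rw [heq]
    exact ENNReal.sum_le_tsum s
  refine hsb.trans (cubeSum_le_of_finite d σ hσ b η c₀ hη ?_
    (ENNReal.ofReal c₀ * G.card) (ENNReal.mul_ne_top (by simp) (by simp)) ?_ Q hQ)
  · intro R hR
    obtain ⟨Fam, hFam, hdisj, hbig, hsum⟩ := h R hR
    exact ⟨Fam, hFam, hdisj, hbig, le_trans (ENNReal.tsum_le_tsum fun x => hba x.1) hsum⟩
  · intro R hR
    -- Each of the at most `G.card` nonzero terms is at most `c₀ σ(R') ≤ c₀ σ(R)`.
    calc cubeSum b R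
        ≤ ∑' x : {R' : Set (Fin d → ℝ) // IsDyadic R' ∧ R' ⊆ R},
            (fun R' => if R' ∈ G then ENNReal.ofReal c₀ * σ R else 0) x.1 := by
          refine ENNReal.tsum_le_tsum fun x => ?_
          by_cases hx : x.1 ∈ G
          · simp only [b, hx, if_true]
            exact (hself x x.2.1).trans (by gcongr; exact x.2.2)
          · simp [b, hx]
      _ ≤ ∑' R', (fun R' => if R' ∈ G then ENNReal.ofReal c₀ * σ R else 0) R' :=
          ENNReal.tsum_comp_le_tsum_of_injective Subtype.val_injective _
      _ = ENNReal.ofReal c₀ * G.card * σ R := by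
          rw [tsum_eq_sum (s := G) (fun R' hR' => by simp [hR'])]
          rw [Finset.sum_congr rfl (fun R' hR' => if_pos hR'), Finset.sum_const, nsmul_eq_mul]
          ring

end Parabolic
end
end
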